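/- arXiv:1111.2171 — 7 statements merged into one kernel-verified Lean document; each statement's English description precedes it below -/
import Mathlib

section
/- Let a be a real number with a > 0 and a² − 12a + 4 ≥ 0. Then the two inequalities |a − 2 + √(a² − 12a + 4)| < 4 and |a − 2 − √(a² − 12a + 4)| < 4 (real square root and real absolute value) both hold if and only if 0 < a ≤ 6 − 4√2. -/
/-- For `a > 0` with `a² - 12a + 4 ≥ 0`, the two inequalities
`|a - 2 + √(a² - 12a + 4)| < 4` and `|a - 2 - √(a² - 12a + 4)| < 4` both hold
if and only if `0 < a ≤ 6 - 4√2`. -/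
theorem abs_lt_four_iff (a : ℝ) (ha : 0 < a) (hdisc : a ^ 2 - 12 * a + 4 ≥ 0) :
    (|a - 2 + Real.sqrt (a ^ 2 - 12 * a + 4)| < 4 ∧
      |a - 2 - Real.sqrt (a ^ 2 - 12 * a + 4)| < 4) ↔
    (0 < a ∧ a ≤ 6 - 4 * Real.sqrt 2) := by
  have hs0 := Real.sqrt_nonneg (a ^ 2 - 12 * a + 4)
  have ht0 := Real.sqrt_nonneg 2
  have ht : Real.sqrt 2 ^ 2 = 2 := Real.sq_sqrt (by norm_num)
  -- The discriminant equals `(a + 2)² - 16a`, which is less than `(a + 2)²`.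
  have hs : Real.sqrt (a ^ 2 - 12 * a + 4) < a + 2 := by
    rw [Real.sqrt_lt' (by linarith)]
    nlinarith
  rw [abs_lt, abs_lt]
  constructor
  · rintro ⟨⟨-, h⟩, -⟩
    refine ⟨ha, ?_⟩
    -- The bound `h` forces `a < 6`, and the discriminant equals `(6 - a)² - 32`.
    have h4 : 4 * Real.sqrt 2 ≤ 6 - a :=
      (abs_le_of_sq_le_sq' (by nlinarith) (by linarith)).2
    linarith
  · rintro ⟨-, h⟩
    have ht1 : 1 < Real.sqrt 2 := by nlinarith
    refine ⟨⟨?_, ?_⟩, ?_, ?_⟩ <;> linarith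
end

section
/- Let a be a real number with 0 < a < 2 and let M_a be the 4×4 real matrix with rows (0, 1, a/2, a/2), (−1, 0, a/2, a/2), (0, 1, 0, 0), (0, 0, 1, 0). Then there exist constants C > 0 and ρ ∈ (0, 1), depending only on a, such that for every natural number j and every vector v ∈ ℝ⁴ one has ‖M_a^j v‖ ≤ C ρ^j ‖v‖, where ‖·‖ is the Euclidean norm on ℝ⁴. -/
/-!
Write `b = a / 2 ∈ (0, 1)`. The matrix satisfies `M⁴ = -(1 - b) M² - b`, so every coordinate of
`M ^ j v` is a real sequence with `x (n + 4) = -(1 - b) x (n + 2) - b x n`. With `p = x n`,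
`q = x (n + 2)`, the quadratic form `V(p, q) = (1 + b)(p² + q²) + 2 (1 - b) p q` is positive
definite, and along the recurrence a step `n → n + 2` lowers it by
`(1 - b) ((1 + b) p + (1 - b) q)²`. One step gives only a semidefinite decrease, but over two
consecutive steps the two linear forms involved are independent (their determinant is `4 b`), so
`V` contracts by a factor `θ < 1` over `n → n + 4` (`lyapunov_contract`). Geometric decay of each
coordinate follows (`recurrence_decay`), and the first four iterates are controlled by operator
norms.
-/

/-- The Schur–Cohn quadratic form of `μ² + (1 - b) μ + b`, a Lyapunov function for the recurrence
`r = -(1 - b) q - b p`. -/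
def lyapunovForm (b p q : ℝ) : ℝ := (1 + b) * (p ^ 2 + q ^ 2) + 2 * (1 - b) * (p * q)

lemma lyapunovForm_lower {b : ℝ} (hb1 : b < 1) (p q : ℝ) :
    2 * b * p ^ 2 ≤ lyapunovForm b p q - 2 * b * q ^ 2 := by
  unfold lyapunovForm
  nlinarith [mul_nonneg (sub_nonneg.2 hb1.le) (sq_nonneg (p + q))]

lemma lyapunovForm_upper {b : ℝ} (hb1 : b < 1) (p q : ℝ) :
    lyapunovForm b p q ≤ 2 * (p ^ 2 + q ^ 2) := by
  unfold lyapunovForm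
  nlinarith [mul_nonneg (sub_nonneg.2 hb1.le) (sq_nonneg (p - q))]

/-- Two steps of the recurrence contract the Lyapunov form strictly. -/
lemma lyapunov_contract {b : ℝ} (hb0 : 0 < b) (hb1 : b < 1) {p q r s : ℝ}
    (hr : r = -(1 - b) * q - b * p) (hs : s = -(1 - b) * r - b * q) :
    lyapunovForm b r s ≤ (1 - (1 - b) * b ^ 2 / 2) * lyapunovForm b p q := by
  obtain ⟨l, hl⟩ : ∃ l, l = (1 + b) * p + (1 - b) * q := ⟨_, rfl⟩
  obtain ⟨m, hm⟩ : ∃ m, m = (1 + b) * q + (1 - b) * r := ⟨_, rfl⟩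
  have hdec : lyapunovForm b r s = lyapunovForm b p q - (1 - b) * (l ^ 2 + m ^ 2) := by
    subst hm hl hs hr
    unfold lyapunovForm
    ring
  -- Inverting the linear system for `l`, `m`, whose determinant is `4 * b`.
  have hp : 4 * b * p = (3 * b - b ^ 2) * l - (1 - b) * m := by
    subst hm hl hr
    ring
  have hq : 4 * b * q = b * (1 - b) * l + (1 + b) * m := by
    subst hm hl hr
    ring
  have cs (u v : ℝ) : (u * l + v * m) ^ 2 ≤ (u ^ 2 + v ^ 2) * (l ^ 2 + m ^ 2) := by
    nlinarith [sq_nonneg (u * m - v * l)]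
  have hL : 0 ≤ l ^ 2 + m ^ 2 := by positivity
  have hp2 : (4 * b * p) ^ 2 ≤ 5 * (l ^ 2 + m ^ 2) := by
    have h1 : (3 * b - b ^ 2) ^ 2 ≤ 2 ^ 2 := by
      apply pow_le_pow_left₀ <;> nlinarith
    have h2 : (-(1 - b)) ^ 2 ≤ 1 := by nlinarith
    calc (4 * b * p) ^ 2 = ((3 * b - b ^ 2) * l + -(1 - b) * m) ^ 2 := by rw [hp]; ring
      _ ≤ _ := cs _ _
      _ ≤ _ := by gcongr; linarith
  have hq2 : (4 * b * q) ^ 2 ≤ 5 * (l ^ 2 + m ^ 2) := by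
    have h1 : (b * (1 - b)) ^ 2 ≤ 1 ^ 2 := by
      apply pow_le_pow_left₀ <;> nlinarith
    have h2 : (1 + b) ^ 2 ≤ 4 := by nlinarith
    calc (4 * b * q) ^ 2 = (b * (1 - b) * l + (1 + b) * m) ^ 2 := by rw [hq]
      _ ≤ _ := cs _ _
      _ ≤ _ := by gcongr; linarith
  have hkey : b ^ 2 / 2 * lyapunovForm b p q ≤ l ^ 2 + m ^ 2 := by
    calc b ^ 2 / 2 * lyapunovForm b p q ≤ b ^ 2 / 2 * (2 * (p ^ 2 + q ^ 2)) := by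
          gcongr
          exact lyapunovForm_upper hb1 p q
      _ ≤ _ := by nlinarith
  have := mul_le_mul_of_nonneg_left hkey (sub_nonneg.2 hb1.le)
  rw [hdec]
  linarith

/-- Uniform geometric decay for all solutions of the scalar recurrence. -/
lemma recurrence_decay {b : ℝ} (hb0 : 0 < b) (hb1 : b < 1) :
    ∃ K > (0 : ℝ), ∃ ρ ∈ Set.Ioo (0 : ℝ) 1, ∀ x : ℕ → ℝ,
      (∀ n, x (n + 4) = -(1 - b) * x (n + 2) - b * x n) →
      ∀ n, |x n| ≤ K * ρ ^ n * (|x 0| + |x 1| + |x 2| + |x 3|) := by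
  obtain ⟨δ, hδ⟩ : ∃ δ, δ = (1 - b) * b ^ 2 / 2 := ⟨_, rfl⟩
  have hδ0 : 0 < δ := by
    have := sub_pos.2 hb1
    rw [hδ]; positivity
  have hδ1 : δ < 1 := by rw [hδ]; nlinarith [sq_nonneg b]
  obtain ⟨ρ, hρ⟩ : ∃ ρ, ρ = 1 - δ / 8 := ⟨_, rfl⟩
  have hρ0 : 0 < ρ := by linarith
  have hρ1 : ρ < 1 := by linarith
  -- Bernoulli; the exponent is `8` as `V` is quadratic and contracts over four indices.
  have hθ : 1 - δ ≤ ρ ^ 8 := by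
    have := one_add_mul_le_pow (a := -(δ / 8)) (by linarith) 8
    rw [hρ]
    push_cast at this
    calc 1 - δ = 1 + 8 * -(δ / 8) := by ring
      _ ≤ _ := this
      _ = _ := by ring
  refine ⟨2 / (b * ρ ^ 3), by positivity, ρ, ⟨hρ0, hρ1⟩, fun x hx => ?_⟩
  obtain ⟨S, hS⟩ : ∃ S, S = |x 0| + |x 1| + |x 2| + |x 3| := ⟨_, rfl⟩
  rw [← hS]
  have a0 := abs_nonneg (x 0)
  have a1 := abs_nonneg (x 1)
  have a2 := abs_nonneg (x 2)
  have a3 := abs_nonneg (x 3)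
  have hS0 : 0 ≤ S := by rw [hS]; positivity
  have hrec (n : ℕ) : |x (n + 4)| ≤ |x (n + 2)| + |x n| := by
    have h1 : |(1 - b) * x (n + 2)| ≤ |x (n + 2)| := by
      rw [abs_mul, abs_of_pos (sub_pos.2 hb1)]
      nlinarith [abs_nonneg (x (n + 2))]
    have h2 : |b * x n| ≤ |x n| := by
      rw [abs_mul, abs_of_pos hb0]
      nlinarith [abs_nonneg (x n)]
    have h3 := abs_add_le (-((1 - b) * x (n + 2))) (-(b * x n))
    rw [abs_neg, abs_neg] at h3
    rw [hx n, show -(1 - b) * x (n + 2) - b * x n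
      = -((1 - b) * x (n + 2)) + -(b * x n) by ring]
    linarith
  have h4 : |x 4| ≤ S := by have := hrec 0; simp only [Nat.zero_add] at this; linarith
  have h5 : |x 5| ≤ S := by have := hrec 1; norm_num at this; linarith
  have hinit {p q : ℝ} (hp : |p| ≤ S) (hq : |q| ≤ S) {k : ℕ} (hk : k ≤ 6) :
      lyapunovForm b p q ≤ 4 * S ^ 2 / ρ ^ 6 * ρ ^ k := by
    have hp' : p ^ 2 ≤ S ^ 2 := by rw [← sq_abs]; gcongr
    have hq' : q ^ 2 ≤ S ^ 2 := by rw [← sq_abs]; gcongr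
    have h1 := lyapunovForm_upper hb1 p q
    have h2 : ρ ^ 6 ≤ ρ ^ k := pow_le_pow_of_le_one hρ0.le hρ1.le hk
    calc lyapunovForm b p q ≤ 4 * S ^ 2 := by linarith
      _ = 4 * S ^ 2 / ρ ^ 6 * ρ ^ 6 := by field_simp
      _ ≤ _ := by gcongr
  have hV : ∀ n, lyapunovForm b (x n) (x (n + 2)) ≤ 4 * S ^ 2 / ρ ^ 6 * ρ ^ (2 * n) := by
    intro n
    induction n using Nat.strong_induction_on with
    | _ n ih =>
      match n, ih with
      | 0, _ => exact hinit (by linarith) (by simp only [Nat.zero_add]; linarith) (by norm_num)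
      | 1, _ => exact hinit (by linarith) (by norm_num; linarith) (by norm_num)
      | 2, _ => exact hinit (by linarith) h4 (by norm_num)
      | 3, _ => exact hinit (by linarith) h5 (by norm_num)
      | n + 4, ih =>
        have hn := ih n (by omega)
        have hc := lyapunov_contract hb0 hb1 (hx n) (hx (n + 2))
        rw [← hδ] at hc
        have hpos : 0 ≤ lyapunovForm b (x n) (x (n + 2)) := by
          have := lyapunovForm_lower hb1 (x n) (x (n + 2))
          have : 0 ≤ 2 * b * x n ^ 2 := by positivity
          have : 0 ≤ 2 * b * x (n + 2) ^ 2 := by positivity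
          linarith
        calc lyapunovForm b (x (n + 4)) (x (n + 4 + 2))
            ≤ (1 - δ) * lyapunovForm b (x n) (x (n + 2)) := hc
          _ ≤ ρ ^ 8 * (4 * S ^ 2 / ρ ^ 6 * ρ ^ (2 * n)) := by gcongr
          _ = _ := by ring
  intro n
  refine abs_le_of_sq_le_sq ?_ (by positivity)
  have h1 := lyapunovForm_lower hb1 (x n) (x (n + 2))
  have h2 : 0 ≤ 2 * b * x (n + 2) ^ 2 := by positivity
  have h3 : 2 * b * x n ^ 2 ≤ 4 * S ^ 2 / ρ ^ 6 * ρ ^ (2 * n) := by linarith [hV n]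
  have h4 : 4 * S ^ 2 / ρ ^ 6 * ρ ^ (2 * n)
      = 2 * b * (b / 2 * (2 / (b * ρ ^ 3) * ρ ^ n * S) ^ 2) := by
    field_simp
    ring
  rw [h4] at h3
  have h5 := le_of_mul_le_mul_left h3 (by positivity)
  exact h5.trans (mul_le_of_le_one_left (sq_nonneg _) (by linarith))

lemma Ma_pow_four (a : ℝ) :
    (!![0, 1, a / 2, a / 2; -1, 0, a / 2, a / 2; 0, 1, 0, 0; 0, 0, 1, 0] :
        Matrix (Fin 4) (Fin 4) ℝ) ^ 4
      = (-(1 - a / 2)) • (!![0, 1, a / 2, a / 2; -1, 0, a / 2, a / 2; 0, 1, 0, 0; 0, 0, 1, 0] :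
        Matrix (Fin 4) (Fin 4) ℝ) ^ 2 - (a / 2) • 1 := by
  rw [pow_mul _ 2 2, sq, sq]
  ext i j
  fin_cases i <;> fin_cases j <;>
    simp [Matrix.mul_apply, Fin.sum_univ_four, -mul_eq_mul_left_iff, -mul_eq_mul_right_iff] <;>
    ring

/-- For `0 < a < 2`, the powers of the matrix `M_a` decay geometrically:
there are `C > 0` and `ρ ∈ (0,1)`, depending only on `a`, such that
`‖M_a^j v‖ ≤ C ρ^j ‖v‖` for every `j ∈ ℕ` and `v ∈ ℝ⁴` (Euclidean norm). -/
theorem Ma_powers_decay (a : ℝ) (ha0 : 0 < a) (ha2 : a < 2) :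
    ∃ C > (0 : ℝ), ∃ ρ ∈ Set.Ioo (0 : ℝ) 1,
      ∀ (j : ℕ) (v : EuclideanSpace ℝ (Fin 4)),
        ‖(WithLp.equiv 2 (Fin 4 → ℝ)).symm
            ((((!![0, 1, a / 2, a / 2;
                -1, 0, a / 2, a / 2;
                0, 1, 0, 0;
                0, 0, 1, 0] : Matrix (Fin 4) (Fin 4) ℝ) ^ j).mulVec
              ((WithLp.equiv 2 (Fin 4 → ℝ)) v)))‖ ≤ C * ρ ^ j * ‖v‖ := by
  have hM := Ma_pow_four a
  generalize (!![0, 1, a / 2, a / 2; -1, 0, a / 2, a / 2; 0, 1, 0, 0; 0, 0, 1, 0] :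
        Matrix (Fin 4) (Fin 4) ℝ) = M at hM ⊢
  obtain ⟨K, hK, ρ, hρ, hdecay⟩ := recurrence_decay (b := a / 2) (by linarith) (by linarith)
  let T : ℕ → EuclideanSpace ℝ (Fin 4) →L[ℝ] EuclideanSpace ℝ (Fin 4) :=
    fun j => Matrix.toEuclideanCLM (𝕜 := ℝ) (M ^ j)
  have hT (j : ℕ) (v : EuclideanSpace ℝ (Fin 4)) :
      (WithLp.equiv 2 (Fin 4 → ℝ)).symm ((M ^ j).mulVec ((WithLp.equiv 2 (Fin 4 → ℝ)) v))
        = T j v := rfl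
  have hcoord (k : ℕ) (v : EuclideanSpace ℝ (Fin 4)) (i : Fin 4) : |T k v i| ≤ ‖T k‖ * ‖v‖ :=
    (PiLp.norm_apply_le (T k v) i).trans ((T k).le_opNorm v)
  have hsum (u : EuclideanSpace ℝ (Fin 4)) : ‖u‖ ≤ ∑ i, |u i| := by
    rw [EuclideanSpace.norm_eq]
    apply Real.sqrt_le_iff.2 ⟨by positivity, ?_⟩
    exact Finset.sum_sq_le_sq_sum_of_nonneg fun i _ => abs_nonneg (u i)
  have hrec (v : EuclideanSpace ℝ (Fin 4)) (i : Fin 4) (n : ℕ) :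
      T (n + 4) v i = -(1 - a / 2) * T (n + 2) v i - a / 2 * T n v i := by
    have h : M ^ (n + 4) = (-(1 - a / 2)) • M ^ (n + 2) - (a / 2) • M ^ n := by
      rw [pow_add, hM, mul_sub, mul_smul_comm, mul_smul_comm, ← pow_add, mul_one]
    simp only [T, h, map_sub, map_smul]
    simp
  let B : ℝ := ‖T 0‖ + ‖T 1‖ + ‖T 2‖ + ‖T 3‖
  have hB : 0 ≤ B := by positivity
  have hρ0 := hρ.1
  refine ⟨4 * K * (B + 1), by positivity, ρ, hρ, fun j v => ?_⟩
  rw [hT]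
  calc ‖T j v‖ ≤ ∑ i, |T j v i| := hsum _
    _ ≤ ∑ _i : Fin 4, K * ρ ^ j * ((B + 1) * ‖v‖) := by
        gcongr with i
        refine (hdecay (fun n => T n v i) (hrec v i) j).trans ?_
        gcongr
        have := norm_nonneg v
        simp only [B]
        linarith [hcoord 0 v i, hcoord 1 v i, hcoord 2 v i, hcoord 3 v i]
    _ = 4 * K * (B + 1) * ρ ^ j * ‖v‖ := by
        simp
        ring
end

section
/- Let ℓ > 0 and a ∈ (0, 2) be real numbers and let f, g : ℝ → ℝ be measurable and locally square-integrable functions such that for all y > 5ℓ/2 one has f(y) = g(y − ℓ) + (a/2)(g(y − 3ℓ) + g(y − 2ℓ)) and g(y) = −f(y − ℓ) + (a/2)(g(y − 3ℓ) + g(y − 2ℓ)). Define E(t) = ∫_{−ℓ/2}^{ℓ/2} (f(x + t)² + g(x + t)²) dx for t ≥ 0. Then there exist constants C₁ ≥ 0 and C₂ > 0, with C₂ depending only on ℓ and a, such that E(t) ≤ C₁ e^{−C₂ t} for all t ≥ 0. -/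
/-!
Eliminating `f` from the two relations decouples `g`: with `q = a / 2`, for `y > 7ℓ/2`,
`g y = -(1 - q) * g (y - 2ℓ) - q * g (y - 4ℓ)`.  The characteristic polynomial
`z² + (1 - q) z + q` has both roots in the open unit disc because `0 < q < 1`.  This is made
quantitative by the quadratic form `lyap q`, which is comparable to `x² + y²` (`lyap_le`,
`le_lyap`) and shrinks by the factor `1 - 4 (1 - q) q² / 5` over two steps of the recurrence
(`lyap_two_steps`).  Hence `g`, and with it `f`, decays geometrically over time shifts of `4ℓ`,
pointwise in `y` (`pointwise_decay`); integrating this over windows of length `ℓ` gives the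
exponential decay of the energy.
-/

open MeasureTheory

/-- Lyapunov form of the recurrence `w (n + 1) = -(1 - q) * w n - q * w (n - 1)`, evaluated at
`x = w n` and `y = w (n - 1)`. -/
def lyap (q x y : ℝ) : ℝ := (1 + q) * (x ^ 2 + y ^ 2) + 2 * (1 - q) * (x * y)

lemma lyap_le {q : ℝ} (hq1 : q < 1) (x y : ℝ) : lyap q x y ≤ 2 * (x ^ 2 + y ^ 2) := by
  unfold lyap
  nlinarith [mul_nonneg (sub_nonneg.2 hq1.le) (sq_nonneg (x - y))]

lemma le_lyap {q : ℝ} (hq1 : q < 1) (x y : ℝ) : 2 * q * (x ^ 2 + y ^ 2) ≤ lyap q x y := by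
  unfold lyap
  nlinarith [mul_nonneg (sub_nonneg.2 hq1.le) (sq_nonneg (x + y))]

/-- Over a single step the form drops by exactly `(1 - q) * ((1 - q) * x + (1 + q) * y) ^ 2`,
which may vanish.  The drops of two consecutive steps involve independent linear forms in
`(x, y)` (determinant `-4q`), so their sum is definite and the contraction is strict. -/
lemma lyap_two_steps {q x y x' x'' : ℝ} (hq0 : 0 < q) (hq1 : q < 1)
    (h' : x' = -(1 - q) * x - q * y) (h'' : x'' = -(1 - q) * x' - q * x) :
    lyap q x'' x' ≤ (1 - 4 * (1 - q) * q ^ 2 / 5) * lyap q x y := by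
  set u := (1 - q) * x + (1 + q) * y with hu
  set v := (1 - q) * x' + (1 + q) * x with hv
  have drop : lyap q x'' x' = lyap q x y - (1 - q) * (u ^ 2 + v ^ 2) := by
    rw [hv, hu, h'', h']
    unfold lyap
    ring
  -- Cramer's rule for `x, y` in terms of `u, v`
  have hx : 4 * q * x = (1 - q) * q * u + (1 + q) * v := by
    rw [hv, hu, h']
    ring
  have hy : 4 * q * y = (1 + q - (1 - q) ^ 2) * u + (-(1 - q)) * v := by
    rw [hv, hu, h']
    ring
  have cs : ∀ α β : ℝ, (α * u + β * v) ^ 2 ≤ (α ^ 2 + β ^ 2) * (u ^ 2 + v ^ 2) := by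
    intro α β
    nlinarith [sq_nonneg (α * v - β * u)]
  have c1 : ((1 - q) * q) ^ 2 ≤ 1 := by
    have h0 : 0 ≤ (1 - q) * q := by nlinarith
    have h1 : (1 - q) * q ≤ 1 := by nlinarith
    nlinarith
  have c2 : (1 + q) ^ 2 ≤ 4 := by nlinarith
  have c3 : (1 + q - (1 - q) ^ 2) ^ 2 ≤ 4 := by
    have h0 : 0 ≤ 1 + q - (1 - q) ^ 2 := by nlinarith
    have h1 : 1 + q - (1 - q) ^ 2 ≤ 2 := by nlinarith
    nlinarith
  have c4 : (-(1 - q)) ^ 2 ≤ 1 := by nlinarith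
  have hN : 0 ≤ u ^ 2 + v ^ 2 := by positivity
  have bx : (4 * q * x) ^ 2 ≤ 5 * (u ^ 2 + v ^ 2) := by
    rw [hx]
    exact (cs _ _).trans (mul_le_mul_of_nonneg_right (by linarith) hN)
  have bry : (4 * q * y) ^ 2 ≤ 5 * (u ^ 2 + v ^ 2) := by
    rw [hy]
    exact (cs _ _).trans (mul_le_mul_of_nonneg_right (by linarith) hN)
  have key : 4 * q ^ 2 / 5 * lyap q x y ≤ u ^ 2 + v ^ 2 := by
    have h := mul_le_mul_of_nonneg_left (lyap_le hq1 x y) (by positivity : 0 ≤ 4 * q ^ 2 / 5)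
    nlinarith
  have := mul_le_mul_of_nonneg_left key (sub_nonneg.2 hq1.le)
  rw [drop]
  linarith

/-- Pointwise form of the decay: every shift by `4ℓ` gains the contraction factor of
`lyap_two_steps`. The pair `(g y, g (y - 2ℓ))` and its translate by `-ℓ` evolve independently,
and together they control both `f` and `g`. -/
lemma pointwise_decay {ℓ q : ℝ} (hℓ : 0 < ℓ) (hq0 : 0 < q) (hq1 : q < 1) {f g : ℝ → ℝ}
    (hf : ∀ y, 5 * ℓ / 2 < y → f y = g (y - ℓ) + q * (g (y - 3 * ℓ) + g (y - 2 * ℓ)))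
    (hg : ∀ y, 5 * ℓ / 2 < y → g y = -f (y - ℓ) + q * (g (y - 3 * ℓ) + g (y - 2 * ℓ)))
    (n : ℕ) {y : ℝ} (hy : 5 * ℓ / 2 < y) :
    f (y + 4 * ℓ * n) ^ 2 + g (y + 4 * ℓ * n) ^ 2 ≤
      3 / q * (1 - 4 * (1 - q) * q ^ 2 / 5) ^ n *
        (g y ^ 2 + g (y - ℓ) ^ 2 + g (y - 2 * ℓ) ^ 2 + g (y - 3 * ℓ) ^ 2) := by
  set ρ := 1 - 4 * (1 - q) * q ^ 2 / 5 with hρ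
  have hρ0 : 0 ≤ ρ := by
    have : (1 - q) * q ^ 2 ≤ 1 := by nlinarith [sq_nonneg q]
    rw [hρ]
    linarith
  have hrec : ∀ z, 7 * ℓ / 2 < z → g z = -(1 - q) * g (z - 2 * ℓ) - q * g (z - 4 * ℓ) := by
    intro z hz
    rw [hg z (by linarith), hf (z - ℓ) (by linarith)]
    ring_nf
  have step : ∀ z, 3 * ℓ / 2 < z → lyap q (g (z + 4 * ℓ)) (g (z + 4 * ℓ - 2 * ℓ)) ≤
      ρ * lyap q (g z) (g (z - 2 * ℓ)) := by
    intro z hz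
    apply lyap_two_steps hq0 hq1
    · rw [hrec (z + 4 * ℓ - 2 * ℓ) (by linarith)]
      ring_nf
    · rw [hrec (z + 4 * ℓ) (by linarith)]
      ring_nf
  have iter : ∀ z, 3 * ℓ / 2 < z → ∀ m : ℕ,
      lyap q (g (z + 4 * ℓ * m)) (g (z + 4 * ℓ * m - 2 * ℓ)) ≤
        ρ ^ m * lyap q (g z) (g (z - 2 * ℓ)) := by
    intro z hz m
    induction m with
    | zero => simp
    | succ m ih =>
      have h1 := step (z + 4 * ℓ * m) (by nlinarith [mul_nonneg hℓ.le (Nat.cast_nonneg (α := ℝ) m)])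
      have h2 := mul_le_mul_of_nonneg_left ih hρ0
      have e : z + 4 * ℓ * ((m + 1 : ℕ) : ℝ) = z + 4 * ℓ * m + 4 * ℓ := by
        push_cast
        ring
      rw [e, pow_succ]
      linarith
  set Y := y + 4 * ℓ * n with hY
  have hYy : 5 * ℓ / 2 < Y := by
    have := mul_nonneg hℓ.le (Nat.cast_nonneg (α := ℝ) n)
    rw [hY]
    linarith
  have i1 := iter y (by linarith) n
  have i2 := iter (y - ℓ) (by linarith) n
  rw [show y - ℓ + 4 * ℓ * n = Y - ℓ by rw [hY]; ring, show y - ℓ - 2 * ℓ = y - 3 * ℓ by ring,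
    show Y - ℓ - 2 * ℓ = Y - 3 * ℓ by ring] at i2
  have hfY : f Y ^ 2 ≤ 3 * (g (Y - ℓ) ^ 2 + g (Y - 3 * ℓ) ^ 2 + g (Y - 2 * ℓ) ^ 2) := by
    rw [hf Y hYy]
    set A := g (Y - ℓ)
    set B := g (Y - 3 * ℓ)
    set C := g (Y - 2 * ℓ)
    have h1 : (A + q * (B + C)) ^ 2 ≤ 3 * (A ^ 2 + q ^ 2 * (B ^ 2 + C ^ 2)) := by
      nlinarith [sq_nonneg (A - q * B), sq_nonneg (A - q * C), sq_nonneg (q * B - q * C)]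
    have h2 : q ^ 2 * (B ^ 2 + C ^ 2) ≤ B ^ 2 + C ^ 2 :=
      mul_le_of_le_one_left (by positivity) (by nlinarith)
    linarith
  have l1 := le_lyap hq1 (g Y) (g (Y - 2 * ℓ))
  have l2 := le_lyap hq1 (g (Y - ℓ)) (g (Y - 3 * ℓ))
  have hρn : 0 ≤ ρ ^ n := pow_nonneg hρ0 n
  have u1 := mul_le_mul_of_nonneg_left (lyap_le hq1 (g y) (g (y - 2 * ℓ))) hρn
  have u2 := mul_le_mul_of_nonneg_left (lyap_le hq1 (g (y - ℓ)) (g (y - 3 * ℓ))) hρn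
  have hS : f Y ^ 2 + g Y ^ 2 ≤
      3 * (g Y ^ 2 + g (Y - 2 * ℓ) ^ 2 + (g (Y - ℓ) ^ 2 + g (Y - 3 * ℓ) ^ 2)) := by
    linarith [sq_nonneg (g Y)]
  have hS' := mul_le_mul_of_nonneg_left hS hq0.le
  rw [div_mul_eq_mul_div, div_mul_eq_mul_div, le_div_iff₀ hq0]
  linarith

/-- Exponential decay of the energy for the pointwise delayed damping at `ξ = ℓ/2`:
if `f, g` are measurable, locally square-integrable and satisfy the
reflection/transmission relations for `y > 5ℓ/2`, then the energy
`E(t) = ∫_{-ℓ/2}^{ℓ/2} (f(x+t)² + g(x+t)²) dx` decays exponentially, with rate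
`C₂` depending only on `ℓ` and `a`. -/
theorem energy_decay_pointwise_delay (ℓ a : ℝ) (hℓ : 0 < ℓ) (ha0 : 0 < a) (ha2 : a < 2) :
    ∃ C₂ > (0 : ℝ), ∀ f g : ℝ → ℝ,
      Measurable f → Measurable g →
      LocallyIntegrable (fun s => f s ^ 2) volume →
      LocallyIntegrable (fun s => g s ^ 2) volume →
      (∀ y, 5 * ℓ / 2 < y →
        f y = g (y - ℓ) + a / 2 * (g (y - 3 * ℓ) + g (y - 2 * ℓ))) →
      (∀ y, 5 * ℓ / 2 < y →
        g y = -f (y - ℓ) + a / 2 * (g (y - 3 * ℓ) + g (y - 2 * ℓ))) →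
      ∃ C₁ ≥ (0 : ℝ), ∀ t : ℝ, 0 ≤ t →
        (∫ x in (-(ℓ / 2))..(ℓ / 2), (f (x + t) ^ 2 + g (x + t) ^ 2)) ≤
          C₁ * Real.exp (-C₂ * t) := by
  set q := a / 2 with hq
  have hq0 : 0 < q := by positivity
  have hq1 : q < 1 := by
    rw [hq]
    linarith
  set ρ := 1 - 4 * (1 - q) * q ^ 2 / 5 with hρ
  have hκ : 0 < (1 - q) * q ^ 2 := mul_pos (sub_pos.2 hq1) (by positivity)
  have hρ0 : 0 < ρ := by
    have : (1 - q) * q ^ 2 ≤ 1 := by nlinarith [sq_nonneg q]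
    rw [hρ]
    linarith
  have hρ1 : ρ < 1 := by
    rw [hρ]
    linarith
  have hc : 0 < -Real.log ρ / (4 * ℓ) := by
    have := Real.log_neg hρ0 hρ1
    apply div_pos <;> linarith
  set c := -Real.log ρ / (4 * ℓ) with hc_def
  have hcρ : -c * (4 * ℓ) = Real.log ρ := by
    rw [hc_def]
    field_simp
  refine ⟨c, hc, fun f g _ _ hf2 hg2 hf hg => ?_⟩
  set S : ℝ → ℝ := fun y => g y ^ 2 + g (y - ℓ) ^ 2 + g (y - 2 * ℓ) ^ 2 + g (y - 3 * ℓ) ^ 2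
    with hS
  have ii : ∀ {h : ℝ → ℝ}, LocallyIntegrable h volume → ∀ u v, IntervalIntegrable h volume u v :=
    fun hh u v => (hh.integrableOn_isCompact isCompact_uIcc).intervalIntegrable
  have Φint : ∀ u v, IntervalIntegrable (fun s => f s ^ 2 + g s ^ 2) volume u v :=
    fun u v => (ii hf2 u v).add (ii hg2 u v)
  have gshift : ∀ d u v, IntervalIntegrable (fun s => g (s - d) ^ 2) volume u v := by
    intro d u v
    have := (ii hg2 (u - d) (v - d)).comp_sub_right d
    simpa using this
  have Sint : ∀ u v, IntervalIntegrable S volume u v := fun u v =>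
    (((ii hg2 u v).add (gshift _ u v)).add (gshift _ u v)).add (gshift _ u v)
  have S0 : ∀ y, 0 ≤ S y := fun y => by
    simp only [hS]
    positivity
  set M₀ := ∫ s in (-(ℓ / 2))..(7 * ℓ / 2), (f s ^ 2 + g s ^ 2) with hM₀
  set M := ∫ s in (5 * ℓ / 2)..(15 * ℓ / 2), S s with hM
  have hM₀0 : 0 ≤ M₀ := intervalIntegral.integral_nonneg (by linarith) fun _ _ => by positivity
  have hM0 : 0 ≤ M := intervalIntegral.integral_nonneg (by linarith) fun s _ => S0 s
  have hK : 0 ≤ 3 / q * M := by positivity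
  refine ⟨(M₀ + 3 / q * M) * Real.exp (c * (7 * ℓ)), by positivity, fun t ht => ?_⟩
  have shift : (∫ x in (-(ℓ / 2))..(ℓ / 2), (f (x + t) ^ 2 + g (x + t) ^ 2)) =
      ∫ s in (-(ℓ / 2) + t)..(ℓ / 2 + t), (f s ^ 2 + g s ^ 2) :=
    intervalIntegral.integral_comp_add_right (fun s => f s ^ 2 + g s ^ 2) t
  rw [mul_assoc, ← Real.exp_add]
  rcases lt_or_ge t (3 * ℓ) with htl | htl
  · have h1 : (∫ x in (-(ℓ / 2))..(ℓ / 2), (f (x + t) ^ 2 + g (x + t) ^ 2)) ≤ M₀ := by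
      rw [shift]
      exact intervalIntegral.integral_mono_interval (by linarith) (by linarith) (by linarith)
        (Filter.Eventually.of_forall fun s => by
          change 0 ≤ f s ^ 2 + g s ^ 2
          positivity) (Φint _ _)
    have h2 : 1 ≤ Real.exp (c * (7 * ℓ) + -c * t) := by
      apply Real.one_le_exp
      nlinarith
    nlinarith
  · -- write `t = s + 4ℓ n` with `3ℓ ≤ s < 7ℓ`
    set n := ⌊(t - 3 * ℓ) / (4 * ℓ)⌋₊ with hn
    have h4 : 0 < 4 * ℓ := by linarith
    have n1 : 4 * ℓ * n ≤ t - 3 * ℓ := by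
      have := Nat.floor_le (div_nonneg (sub_nonneg.2 htl) h4.le)
      rw [← hn, le_div_iff₀ h4] at this
      linarith
    have n2 : t - 3 * ℓ < 4 * ℓ * n + 4 * ℓ := by
      have := Nat.lt_floor_add_one ((t - 3 * ℓ) / (4 * ℓ))
      rw [← hn, div_lt_iff₀ h4] at this
      linarith
    set s := t - 4 * ℓ * n with hs
    have hρn : ρ ^ n = Real.exp (-c * (4 * ℓ * n)) := by
      rw [← mul_assoc, hcρ, mul_comm, Real.exp_nat_mul, Real.exp_log hρ0]
    have h1 : (∫ x in (-(ℓ / 2))..(ℓ / 2), (f (x + t) ^ 2 + g (x + t) ^ 2)) ≤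
        ∫ x in (-(ℓ / 2))..(ℓ / 2), 3 / q * ρ ^ n * S (x + s) := by
      -- the relations hold only for `y > 5ℓ/2`, so the left endpoint is excluded when `s = 3ℓ`
      apply intervalIntegral.integral_mono_on_of_le_Ioo (by linarith)
      · have := (Φint (-(ℓ / 2) + t) (ℓ / 2 + t)).comp_add_right t
        simpa using this
      · have := ((Sint (-(ℓ / 2) + s) (ℓ / 2 + s)).comp_add_right s).const_mul (3 / q * ρ ^ n)
        simpa using this
      · intro x hx
        have := pointwise_decay hℓ hq0 hq1 hf hg n (y := x + s) (by linarith [hx.1])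
        rwa [show x + s + 4 * ℓ * n = x + t by rw [hs]; ring] at this
    have h2 : (∫ x in (-(ℓ / 2))..(ℓ / 2), S (x + s)) ≤ M := by
      rw [intervalIntegral.integral_comp_add_right S s]
      exact intervalIntegral.integral_mono_interval (by linarith) (by linarith) (by linarith)
        (Filter.Eventually.of_forall S0) (Sint _ _)
    rw [intervalIntegral.integral_const_mul] at h1
    have h3 : ρ ^ n ≤ Real.exp (c * (7 * ℓ) + -c * t) := by
      rw [hρn]
      apply Real.exp_le_exp.2
      nlinarith
    calc _ ≤ 3 / q * ρ ^ n * M := h1.trans (mul_le_mul_of_nonneg_left h2 (by positivity))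
      _ = 3 / q * M * ρ ^ n := by ring
      _ ≤ 3 / q * M * Real.exp (c * (7 * ℓ) + -c * t) := mul_le_mul_of_nonneg_left h3 hK
      _ ≤ _ := mul_le_mul_of_nonneg_right (by linarith) (Real.exp_pos _).le
end

section
/- Let ℓ > 0 and let α₋, α₊ : ℝ → ℝ be continuously differentiable. Define u(x, t) = α₋(x + t) − α₋(t − x) for x ∈ (0, ℓ/2) and u(x, t) = α₊(x − ℓ + t) + α₊(t − x + ℓ) for x ∈ (ℓ/2, ℓ). Then for every t ∈ ℝ, (1/2)∫₀^ℓ ( (∂u/∂x (x, t))² + (∂u/∂t (x, t))² ) dx = ∫_{t−ℓ/2}^{t+ℓ/2} ( α₋′(s)² + α₊′(s)² ) ds. -/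
/-!
On each piece `u` is a sum or difference of a left- and a right-travelling wave with the same
profile `α`, so `u_x` and `u_t` are, in some order, the sum and the difference of the derivatives
`p = α'(x + c)` and `q = α'(d - x)`, where `c = d = t` on the left piece and `c = t - ℓ`,
`d = t + ℓ` on the right one. By the parallelogram law `(p + q)² + (p - q)² = 2 (p² + q²)` the
energy density is `p² + q²`. The translation in `p` and the reflection in `q` map the piece onto the
two halves of `(t - ℓ/2, t + ℓ/2)`, so that it
contributes the integral of `α'²` over the whole of that interval.
-/

/-- Parallelogram law for the odd (Dirichlet) reflection form. -/
lemma density_minus {α : ℝ → ℝ} (hα : ContDiff ℝ 1 α) (x t : ℝ) :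
    (deriv (fun y => α (y + t) - α (t - y)) x) ^ 2 +
      (deriv (fun s => α (x + s) - α (s - x)) t) ^ 2 =
    2 * ((deriv α (x + t)) ^ 2 + (deriv α (t - x)) ^ 2) := by
  have hd : ∀ z, HasDerivAt α (deriv α z) z := fun z =>
    (hα.differentiable one_ne_zero z).hasDerivAt
  have h1 := ((hd (x + t)).comp_add_const x t).sub ((hd (t - x)).comp_const_sub t x)
  have h2 := ((hd (x + t)).comp_const_add x t).sub ((hd (t - x)).comp_sub_const t x)
  have e1 : deriv (fun y => α (y + t) - α (t - y)) x = _ := h1.deriv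
  have e2 : deriv (fun s => α (x + s) - α (s - x)) t = _ := h2.deriv
  rw [e1, e2]
  ring

/-- Parallelogram law for the even (Neumann) reflection form centred at `ℓ`. -/
lemma density_plus {α : ℝ → ℝ} (hα : ContDiff ℝ 1 α) (ℓ x t : ℝ) :
    (deriv (fun y => α (y - ℓ + t) + α (t - y + ℓ)) x) ^ 2 +
      (deriv (fun s => α (x - ℓ + s) + α (s - x + ℓ)) t) ^ 2 =
    2 * ((deriv α (x + (t - ℓ))) ^ 2 + (deriv α (t + ℓ - x)) ^ 2) := by
  have hd : ∀ z, HasDerivAt α (deriv α z) z := fun z =>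
    (hα.differentiable one_ne_zero z).hasDerivAt
  have h1 := ((hd (x + (t - ℓ))).comp_add_const x (t - ℓ)).add
    ((hd (t + ℓ - x)).comp_const_sub (t + ℓ) x)
  have h2 := ((hd ((x - ℓ) + t)).comp_const_add (x - ℓ) t).add
    ((hd (t - (x - ℓ))).comp_sub_const t (x - ℓ))
  have f1 : (fun y => α (y - ℓ + t) + α (t - y + ℓ)) =
      fun y => α (y + (t - ℓ)) + α (t + ℓ - y) := by
    funext y; congr 2 <;> ring
  have f2 : (fun s => α (x - ℓ + s) + α (s - x + ℓ)) =
      fun s => α (x - ℓ + s) + α (s - (x - ℓ)) := by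
    funext y; congr 2; ring
  have e1 : deriv (fun y => α (y + (t - ℓ)) + α (t + ℓ - y)) x = _ := h1.deriv
  have e2 : deriv (fun s => α (x - ℓ + s) + α (s - (x - ℓ))) t = _ := h2.deriv
  rw [f1, f2, e1, e2, show x - ℓ + t = x + (t - ℓ) by ring,
    show t - (x - ℓ) = t + ℓ - x by ring]
  ring

/-- Change of variables in the two travelling waves, by translation and by reflection. -/
lemma integral_travelling {g : ℝ → ℝ} (hg : Continuous g) (a b c d : ℝ) :
    ∫ x in a..b, 2 * (g (x + c) + g (d - x)) =
      2 * ((∫ s in (a + c)..(b + c), g s) + ∫ s in (d - b)..(d - a), g s) := by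
  have h1 : Continuous fun x => g (x + c) := by fun_prop
  have h2 : Continuous fun x => g (d - x) := by fun_prop
  rw [intervalIntegral.integral_const_mul, intervalIntegral.integral_add
    (h1.intervalIntegrable _ _) (h2.intervalIntegrable _ _),
    intervalIntegral.integral_comp_add_right, intervalIntegral.integral_comp_sub_left]

/-- Energy identity for the piecewise D'Alembert form with interface at `ξ = ℓ/2`:
with `u = α₋(x+t) - α₋(t-x)` on `(0, ℓ/2)` and `u = α₊(x-ℓ+t) + α₊(t-x+ℓ)` on
`(ℓ/2, ℓ)`, one has
`(1/2)∫₀^ℓ (u_x² + u_t²) dx = ∫_{t-ℓ/2}^{t+ℓ/2} (α₋'(s)² + α₊'(s)²) ds`,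
the integral over `(0,ℓ)` being the sum of the integrals over the two pieces. -/
theorem dAlembert_energy_piecewise (ℓ : ℝ) (hℓ : 0 < ℓ) (αm αp : ℝ → ℝ)
    (hαm : ContDiff ℝ 1 αm) (hαp : ContDiff ℝ 1 αp) :
    ∀ t : ℝ,
      (1 / 2) * ((∫ x in (0 : ℝ)..(ℓ / 2),
            ((deriv (fun y => αm (y + t) - αm (t - y)) x) ^ 2 +
              (deriv (fun s => αm (x + s) - αm (s - x)) t) ^ 2)) +
          (∫ x in (ℓ / 2)..ℓ,
            ((deriv (fun y => αp (y - ℓ + t) + αp (t - y + ℓ)) x) ^ 2 +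
              (deriv (fun s => αp (x - ℓ + s) + αp (s - x + ℓ)) t) ^ 2))) =
        ∫ s in (t - ℓ / 2)..(t + ℓ / 2), ((deriv αm s) ^ 2 + (deriv αp s) ^ 2) := by
  intro t
  have hm : Continuous fun s => (deriv αm s) ^ 2 := (hαm.continuous_deriv le_rfl).pow 2
  have hp : Continuous fun s => (deriv αp s) ^ 2 := (hαp.continuous_deriv le_rfl).pow 2
  simp only [density_minus hαm, density_plus hαp]
  rw [integral_travelling hm, integral_travelling hp,
    intervalIntegral.integral_add (hm.intervalIntegrable _ _) (hp.intervalIntegrable _ _),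
    ← intervalIntegral.integral_add_adjacent_intervals
      (hm.intervalIntegrable (t - ℓ / 2) t) (hm.intervalIntegrable t (t + ℓ / 2)),
    ← intervalIntegral.integral_add_adjacent_intervals
      (hp.intervalIntegrable (t - ℓ / 2) t) (hp.intervalIntegrable t (t + ℓ / 2)),
    show 0 + t = t by ring, show ℓ / 2 + t = t + ℓ / 2 by ring, show t - 0 = t by ring,
    show ℓ / 2 + (t - ℓ) = t - ℓ / 2 by ring, show ℓ + (t - ℓ) = t by ring,
    show t + ℓ - ℓ = t by ring, show t + ℓ - ℓ / 2 = t + ℓ / 2 by ring]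
  ring
end

section
/- Let μ₁ ≠ 1 and μ₂ be real numbers and set κ = (1 + μ₁)/(μ₁ − 1). Then |κ(μ₂ − 1) − μ₂| < 1 if and only if either 1 < μ₂ < μ₁ or μ₁ < μ₂ < 1. -/
/-- With `κ = (1+μ₁)/(μ₁-1)` (for `μ₁ ≠ 1`), one has `|κ(μ₂-1) - μ₂| < 1` if and
only if `1 < μ₂ < μ₁` or `μ₁ < μ₂ < 1`. -/
theorem eigenvalue_condition_iff (μ₁ μ₂ : ℝ) (hμ₁ : μ₁ ≠ 1) :
    |(1 + μ₁) / (μ₁ - 1) * (μ₂ - 1) - μ₂| < 1 ↔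
      (1 < μ₂ ∧ μ₂ < μ₁) ∨ (μ₁ < μ₂ ∧ μ₂ < 1) := by
  have hne : μ₁ - 1 ≠ 0 := sub_ne_zero.mpr hμ₁
  -- The eigenvalue is `2t - 1` with `t = (μ₂-1)/(μ₁-1)`, so the condition says `0 < t < 1`,
  -- i.e. `μ₂` lies strictly between `1` and `μ₁`.
  have key : (1 + μ₁) / (μ₁ - 1) * (μ₂ - 1) - μ₂ = 2 * ((μ₂ - 1) / (μ₁ - 1)) - 1 := by
    field_simp
    ring
  have unit_interval : |2 * ((μ₂ - 1) / (μ₁ - 1)) - 1| < 1 ↔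
      0 < (μ₂ - 1) / (μ₁ - 1) ∧ (μ₂ - 1) / (μ₁ - 1) < 1 := by
    rw [abs_lt]
    constructor <;> rintro ⟨h₁, h₂⟩ <;> constructor <;> linarith
  rw [key, unit_interval]
  rcases lt_or_gt_of_ne hμ₁ with h | h
  · have hneg : μ₁ - 1 < 0 := by linarith
    rw [div_lt_one_of_neg hneg, lt_div_iff_of_neg hneg]
    constructor
    · rintro ⟨h₁, h₂⟩
      exact Or.inr ⟨by linarith, by linarith⟩
    · rintro (⟨h₁, h₂⟩ | ⟨h₁, h₂⟩) <;> constructor <;> linarith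
  · have hpos : 0 < μ₁ - 1 := by linarith
    rw [div_lt_one hpos, lt_div_iff₀ hpos]
    constructor
    · rintro ⟨h₁, h₂⟩
      exact Or.inl ⟨by linarith, by linarith⟩
    · rintro (⟨h₁, h₂⟩ | ⟨h₁, h₂⟩) <;> constructor <;> linarith
end

section
/- Let ℓ > 0, let μ₁ ≠ 1 and μ₂ be real numbers satisfying either 1 < μ₂ < μ₁ or μ₁ < μ₂ < 1, and set κ = (1 + μ₁)/(μ₁ − 1). Let h : ℝ → ℝ be measurable and locally square-integrable, and suppose that for every natural number i: h(y) = κ h(y − 2ℓ) for all y ∈ ((4i+3)ℓ, (4i+5)ℓ), and h(y) = (μ₂ − 1) h(y − 2ℓ) − μ₂ h(y − 4ℓ) for all y ∈ ((4i+5)ℓ, (4i+7)ℓ). Define E(t) = ∫_{t−ℓ}^{t+ℓ} h(s)² ds. Then there exist constants C₁ ≥ 0 and C₂ > 0, with C₂ depending only on ℓ, μ₁ and μ₂, such that E(t) ≤ C₁ e^{−C₂ t} for all t ≥ 0. -/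
open MeasureTheory

/-!
Combining the two recurrences shows that, off the odd multiples of `ℓ`, the profile satisfies
`h (s + 4ℓ) = r * h s` for `s > ℓ`, where `r = (μ₂ - 1) κ - μ₂ = 2 (μ₂ - 1) / (μ₁ - 1) - 1`
(`profile_shift`). The condition on `μ₁, μ₂` says exactly that `0 < (μ₂ - 1) / (μ₁ - 1) < 1`,
so `|r| < 1`. Hence `E (t + 4ℓ) = r² E t` for `t ≥ 2ℓ` (`energy_shift`), and a bounded quantity
which contracts by a fixed factor over each period decays exponentially (`decay_of_contraction`).
-/

/-- The ratio by which the profile is multiplied over one full switching period `4ℓ`. -/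
noncomputable def periodRatio (μ₁ μ₂ : ℝ) : ℝ := (μ₂ - 1) * ((1 + μ₁) / (μ₁ - 1)) - μ₂

lemma periodRatio_sq_lt_one {μ₁ μ₂ : ℝ}
    (hcond : (1 < μ₂ ∧ μ₂ < μ₁) ∨ (μ₁ < μ₂ ∧ μ₂ < 1)) : periodRatio μ₁ μ₂ ^ 2 < 1 := by
  have hne : μ₁ - 1 ≠ 0 := by
    rcases hcond with ⟨h1, h2⟩ | ⟨h1, h2⟩
    · exact ne_of_gt (by linarith)
    · exact ne_of_lt (by linarith)
  have hr : periodRatio μ₁ μ₂ = 2 * ((μ₂ - 1) / (μ₁ - 1)) - 1 := by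
    unfold periodRatio
    field_simp
    ring
  have hx : 0 < (μ₂ - 1) / (μ₁ - 1) ∧ (μ₂ - 1) / (μ₁ - 1) < 1 := by
    rcases hcond with ⟨h1, h2⟩ | ⟨h1, h2⟩
    · exact ⟨div_pos (by linarith) (by linarith), (div_lt_one (by linarith)).2 (by linarith)⟩
    · exact ⟨div_pos_of_neg_of_neg (by linarith) (by linarith),
        (div_lt_one_of_neg (by linarith)).2 (by linarith)⟩
  rw [hr]
  nlinarith [mul_pos hx.1 (sub_pos.2 hx.2)]

/-- The points `(2n+1)ℓ`, at which the recurrences say nothing, have to be excluded. -/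
lemma profile_shift {ℓ μ₁ μ₂ : ℝ} (hℓ : 0 < ℓ) {h : ℝ → ℝ}
    (h1 : ∀ i : ℕ, ∀ y ∈ Set.Ioo ((4 * (i : ℝ) + 3) * ℓ) ((4 * (i : ℝ) + 5) * ℓ),
      h y = (1 + μ₁) / (μ₁ - 1) * h (y - 2 * ℓ))
    (h2 : ∀ i : ℕ, ∀ y ∈ Set.Ioo ((4 * (i : ℝ) + 5) * ℓ) ((4 * (i : ℝ) + 7) * ℓ),
      h y = (μ₂ - 1) * h (y - 2 * ℓ) - μ₂ * h (y - 4 * ℓ))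
    {s : ℝ} (hs : ℓ < s) (hodd : ∀ n : ℕ, s ≠ (2 * (n : ℝ) + 1) * ℓ) :
    h (s + 4 * ℓ) = periodRatio μ₁ μ₂ * h s := by
  have key : ∀ (i : ℕ) (y : ℝ), (4 * (i : ℝ) + 1) * ℓ < y → y < (4 * (i : ℝ) + 3) * ℓ →
      h (y + 4 * ℓ) = periodRatio μ₁ μ₂ * h y := by
    intro i y hy1 hy2
    have e2 := h2 i (y + 4 * ℓ) ⟨by linarith, by linarith⟩
    have e1 := h1 i (y + 2 * ℓ) ⟨by linarith, by linarith⟩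
    rw [show y + 4 * ℓ - 2 * ℓ = y + 2 * ℓ by ring, show y + 4 * ℓ - 4 * ℓ = y by ring] at e2
    rw [show y + 2 * ℓ - 2 * ℓ = y by ring] at e1
    rw [e2, e1, periodRatio]
    ring
  obtain ⟨n, hn1, hn2⟩ : ∃ n : ℕ, (2 * (n : ℝ) + 1) * ℓ < s ∧ s < (2 * (n : ℝ) + 3) * ℓ := by
    have hpos : 0 ≤ (s - ℓ) / (2 * ℓ) := div_nonneg (by linarith) (by linarith)
    refine ⟨⌊(s - ℓ) / (2 * ℓ)⌋₊, lt_of_le_of_ne ?_ (hodd _).symm, ?_⟩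
    · have := (le_div_iff₀ (by linarith)).1 (Nat.floor_le hpos)
      linarith
    · have := (div_lt_iff₀ (by linarith)).1 (Nat.lt_floor_add_one ((s - ℓ) / (2 * ℓ)))
      linarith
  rcases Nat.even_or_odd' n with ⟨i, rfl | rfl⟩
  · push_cast at hn1 hn2
    exact key i s (by linarith) (by linarith)
  · push_cast at hn1 hn2
    have e1 := h1 i s ⟨by linarith, by linarith⟩
    have e2 := h1 (i + 1) (s + 4 * ℓ) ⟨by push_cast; linarith, by push_cast; linarith⟩
    have e3 := key i (s - 2 * ℓ) (by linarith) (by linarith)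
    rw [show s + 4 * ℓ - 2 * ℓ = s - 2 * ℓ + 4 * ℓ by ring, e3] at e2
    rw [e2, e1]
    ring

lemma energy_shift {ℓ r : ℝ} (hℓ : 0 < ℓ) {h : ℝ → ℝ}
    (hshift : ∀ s : ℝ, ℓ < s → (∀ n : ℕ, s ≠ (2 * (n : ℝ) + 1) * ℓ) → h (s + 4 * ℓ) = r * h s)
    {t : ℝ} (ht : 2 * ℓ ≤ t) :
    (∫ s in (t + 4 * ℓ - ℓ)..(t + 4 * ℓ + ℓ), h s ^ 2)
      = r ^ 2 * ∫ s in (t - ℓ)..(t + ℓ), h s ^ 2 := by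
  have hodd : ∀ᵐ s : ℝ, s ∉ Set.range (fun n : ℕ => (2 * (n : ℝ) + 1) * ℓ) :=
    (Set.countable_range _).ae_notMem volume
  rw [show t + 4 * ℓ - ℓ = t - ℓ + 4 * ℓ by ring, show t + 4 * ℓ + ℓ = t + ℓ + 4 * ℓ by ring,
    ← intervalIntegral.integral_comp_add_right (fun s => h s ^ 2) (4 * ℓ),
    ← intervalIntegral.integral_const_mul]
  refine intervalIntegral.integral_congr_ae ?_
  filter_upwards [hodd] with s hs hmem
  rw [Set.uIoc_of_le (by linarith)] at hmem
  rw [hshift s (by linarith [hmem.1]) fun n hn => hs ⟨n, hn.symm⟩]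
  ring

/-- A function bounded above on `[0, a + p]` and contracting by `exp (-c p)` over each
period `p` from time `a` on decays at rate `c`. -/
lemma decay_of_contraction {E : ℝ → ℝ} {a p c M : ℝ} (ha : 0 ≤ a) (hp : 0 < p) (hc : 0 < c)
    (hM : 0 ≤ M) (hbound : ∀ t, 0 ≤ t → t ≤ a + p → E t ≤ M)
    (hcontr : ∀ t, a ≤ t → E (t + p) ≤ Real.exp (-c * p) * E t) {t : ℝ} (ht : 0 ≤ t) :
    E t ≤ M * Real.exp (c * (a + p)) * Real.exp (-c * t) := by
  have main : ∀ n : ℕ, ∀ t, 0 ≤ t → t ≤ a + p + n * p →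
      E t ≤ M * Real.exp (c * (a + p)) * Real.exp (-c * t) := by
    intro n
    induction n with
    | zero =>
      intro t ht0 ht1
      have ht1 : t ≤ a + p := by simpa using ht1
      rw [mul_assoc, ← Real.exp_add]
      refine (hbound t ht0 ht1).trans (le_mul_of_one_le_right hM (Real.one_le_exp ?_))
      nlinarith
    | succ n ih =>
      intro t ht0 ht1
      push_cast at ht1
      by_cases hta : t ≤ a + p
      · exact ih t ht0 (hta.trans (le_add_of_nonneg_right (by positivity)))
      · push Not at hta
        have e1 := hcontr (t - p) (by linarith)
        rw [sub_add_cancel] at e1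
        have e2 := ih (t - p) (by linarith) (by linarith)
        calc E t ≤ Real.exp (-c * p) * E (t - p) := e1
          _ ≤ Real.exp (-c * p) * (M * Real.exp (c * (a + p)) * Real.exp (-c * (t - p))) := by
            gcongr
          _ = M * Real.exp (c * (a + p)) * Real.exp (-c * t) := by
            rw [show -c * t = -c * p + -c * (t - p) by ring, Real.exp_add]
            ring
  obtain ⟨n, hn⟩ := exists_nat_ge (t / p)
  rw [div_le_iff₀ hp] at hn
  exact main n t ht (by linarith)

/-- Exponential decay of the energy for the switched boundary damping: if
`1 < μ₂ < μ₁` or `μ₁ < μ₂ < 1` and `h` is measurable, locally square-integrable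
and satisfies the recurrences `h(y) = κ h(y-2ℓ)` on `((4i+3)ℓ, (4i+5)ℓ)` and
`h(y) = (μ₂-1) h(y-2ℓ) - μ₂ h(y-4ℓ)` on `((4i+5)ℓ, (4i+7)ℓ)`, with
`κ = (1+μ₁)/(μ₁-1)`, then the energy `E(t) = ∫_{t-ℓ}^{t+ℓ} h(s)² ds` decays
exponentially with a rate depending only on `ℓ`, `μ₁` and `μ₂`. -/
theorem energy_decay_switched_boundary (ℓ μ₁ μ₂ : ℝ) (hℓ : 0 < ℓ) (hμ₁ : μ₁ ≠ 1)
    (hcond : (1 < μ₂ ∧ μ₂ < μ₁) ∨ (μ₁ < μ₂ ∧ μ₂ < 1)) :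
    ∃ C₂ > (0 : ℝ), ∀ h : ℝ → ℝ,
      Measurable h →
      LocallyIntegrable (fun s => h s ^ 2) volume →
      (∀ i : ℕ, ∀ y ∈ Set.Ioo ((4 * (i : ℝ) + 3) * ℓ) ((4 * (i : ℝ) + 5) * ℓ),
        h y = (1 + μ₁) / (μ₁ - 1) * h (y - 2 * ℓ)) →
      (∀ i : ℕ, ∀ y ∈ Set.Ioo ((4 * (i : ℝ) + 5) * ℓ) ((4 * (i : ℝ) + 7) * ℓ),
        h y = (μ₂ - 1) * h (y - 2 * ℓ) - μ₂ * h (y - 4 * ℓ)) →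
      ∃ C₁ ≥ (0 : ℝ), ∀ t : ℝ, 0 ≤ t →
        (∫ s in (t - ℓ)..(t + ℓ), h s ^ 2) ≤ C₁ * Real.exp (-C₂ * t) := by
  -- The contraction factor `r²` may vanish, so it is replaced by `q = max (r²) (1/2) ∈ (0, 1)`,
  -- and the rate is chosen so that `exp (-C₂ * 4ℓ) = q`.
  obtain ⟨q, hq0, hq1, hrq⟩ : ∃ q : ℝ, 0 < q ∧ q < 1 ∧ periodRatio μ₁ μ₂ ^ 2 ≤ q :=
    ⟨max (periodRatio μ₁ μ₂ ^ 2) (1 / 2), lt_max_of_lt_right (by norm_num),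
      max_lt (periodRatio_sq_lt_one hcond) (by norm_num), le_max_left _ _⟩
  have hc : 0 < -Real.log q / (4 * ℓ) :=
    div_pos (neg_pos.2 (Real.log_neg hq0 hq1)) (by linarith)
  have hexp : Real.exp (-(-Real.log q / (4 * ℓ)) * (4 * ℓ)) = q := by
    rw [neg_mul, div_mul_cancel₀ _ (by linarith), neg_neg, Real.exp_log hq0]
  refine ⟨_, hc, fun h _ hint h1 h2 => ?_⟩
  have hnonneg : ∀ {a b : ℝ}, a ≤ b → 0 ≤ ∫ s in a..b, h s ^ 2 := fun hab =>
    intervalIntegral.integral_nonneg hab fun s _ => sq_nonneg (h s)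
  have hM : 0 ≤ ∫ s in (-ℓ)..(7 * ℓ), h s ^ 2 := hnonneg (by linarith)
  refine ⟨_, mul_nonneg hM (Real.exp_pos _).le, fun t ht =>
    decay_of_contraction (E := fun t => ∫ s in (t - ℓ)..(t + ℓ), h s ^ 2) (a := 2 * ℓ)
      (by linarith) (by linarith : 0 < 4 * ℓ) hc hM ?_ ?_ ht⟩
  · intro t ht0 ht1
    exact intervalIntegral.integral_mono_interval (by linarith) (by linarith) (by linarith)
      (Filter.Eventually.of_forall fun s => sq_nonneg (h s))
      ((hint.integrableOn_isCompact isCompact_uIcc).intervalIntegrable)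
  · intro t ht0
    rw [hexp]
    refine (energy_shift hℓ (fun s hs hodd => profile_shift hℓ h1 h2 hs hodd) ht0).trans_le ?_
    exact mul_le_mul_of_nonneg_right hrq (hnonneg (by linarith))
end

section
/- Let c ≥ 0 be a real number, let s₀ < s₁ be real numbers, and let F : [s₀, s₁] → ℝ be differentiable with F(t) ≥ 0 and F′(t) ≤ c · √(F(t)) for all t ∈ [s₀, s₁]. Then √(F(t)) ≤ √(F(s₀)) + (c/2)(t − s₀) for all t ∈ [s₀, s₁]. -/
/-!
A comparison argument that never differentiates `√F`, which may fail to be differentiable where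
`F` vanishes. For `ε > 0` the affine function `g t = √(F s₀) + ε + (c / 2 + ε) (t - s₀)` is positive,
and wherever `F = g²` one has `F' ≤ c g < 2 g (c / 2 + ε) = (g²)'`. The fencing theorem
`image_le_of_deriv_right_lt_deriv_boundary` therefore gives `F ≤ g²`, i.e. `√F ≤ g`, on the whole
interval, and letting `ε → 0` gives the bound.
-/

/-- Differential-inequality step: if `F ≥ 0` is differentiable on `[s₀, s₁]`
with `F' ≤ c √F` there (`c ≥ 0`), then `√F(t) ≤ √F(s₀) + (c/2)(t - s₀)` on
`[s₀, s₁]`. -/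
theorem sqrt_energy_growth (c s₀ s₁ : ℝ) (hc : 0 ≤ c) (hs : s₀ < s₁)
    (F F' : ℝ → ℝ)
    (hderiv : ∀ t ∈ Set.Icc s₀ s₁, HasDerivWithinAt F (F' t) (Set.Icc s₀ s₁) t)
    (hFnonneg : ∀ t ∈ Set.Icc s₀ s₁, 0 ≤ F t)
    (hF' : ∀ t ∈ Set.Icc s₀ s₁, F' t ≤ c * Real.sqrt (F t)) :
    ∀ t ∈ Set.Icc s₀ s₁,
      Real.sqrt (F t) ≤ Real.sqrt (F s₀) + c / 2 * (t - s₀) := by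
  intro t ht
  have key : ∀ ε > 0, √(F t) ≤ √(F s₀) + ε + (c / 2 + ε) * (t - s₀) := by
    intro ε hε
    have hpos : ∀ x, s₀ ≤ x → 0 < √(F s₀) + ε + (c / 2 + ε) * (x - s₀) := by
      intro x hx
      have := mul_nonneg (by positivity : 0 ≤ c / 2 + ε) (sub_nonneg.2 hx)
      have := Real.sqrt_nonneg (F s₀)
      linarith
    have hB : ∀ x, HasDerivAt (fun x => (√(F s₀) + ε + (c / 2 + ε) * (x - s₀)) ^ 2)
        (2 * (√(F s₀) + ε + (c / 2 + ε) * (x - s₀)) * (c / 2 + ε)) x := by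
      intro x
      have h := ((((hasDerivAt_id x).sub_const s₀).const_mul (c / 2 + ε)).const_add
        (√(F s₀) + ε)).fun_pow 2
      simpa using h
    have hF : F t ≤ (√(F s₀) + ε + (c / 2 + ε) * (t - s₀)) ^ 2 := by
      refine image_le_of_deriv_right_lt_deriv_boundary (f' := F')
        (fun x hx => (hderiv x hx).continuousWithinAt) ?_ ?_ hB ?_ ht
      · intro x hx
        exact (hderiv x (Set.Ico_subset_Icc_self hx)).mono_of_mem_nhdsWithin
          (Icc_mem_nhdsGE_of_mem hx)
      · have h0 := Real.sq_sqrt (hFnonneg s₀ (Set.left_mem_Icc.2 hs.le))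
        have := Real.sqrt_nonneg (F s₀)
        simp only [sub_self, mul_zero, add_zero]
        nlinarith
      · intro x hx hx_eq
        have hg := hpos x hx.1
        have h := hF' x (Set.Ico_subset_Icc_self hx)
        rw [hx_eq, Real.sqrt_sq hg.le] at h
        nlinarith [mul_pos hg hε]
    exact Real.sqrt_le_iff.2 ⟨(hpos t ht.1).le, hF⟩
  refine le_of_forall_pos_le_add fun δ hδ => ?_
  have hT : 0 < 1 + (t - s₀) := by linarith [ht.1]
  -- The total error `ε + ε (t - s₀)` equals `δ` for this choice of `ε`.
  have h := key (δ / (1 + (t - s₀))) (div_pos hδ hT)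
  have h2 : δ / (1 + (t - s₀)) * (1 + (t - s₀)) = δ := div_mul_cancel₀ _ hT.ne'
  linarith
end
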